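/- arXiv:1311.6880 — 2 statements merged into one kernel-verified Lean document; each statement's English description precedes it below -/
import Mathlib

section
/- Let K ≥ 1. Let g : Fin K → EuclideanSpace ℂ (Fin (2K)) be the relay-to-receiver channel vectors of the side-A receivers, let hBA : Fin K → Fin K → ℂ be the direct channel gains (hBA m p is the gain from side-B transmitter b_m to side-A receiver a_p), and let uA, uB : Fin K → EuclideanSpace ℂ (Fin (2K)) be beamforming vectors. Assume the nullification conditions ⟪g p, uA m⟫ = 0 for all p ≠ m, and the interference-neutralization conditions hBA m p + ⟪g p, uB m⟫ = 0 for all p ≠ m. Then for all symbol vectors sA, sB : Fin K → ℂ and every receiver index p, subtracting the known self-interference term yields an interference-free observation: (∑_m hBA m p · sB m) + ⟪g p, (∑_m sA m • uA m) + (∑_m sB m • uB m)⟫ − ⟪g p, uA p⟫ · sA p = (hBA p p + ⟪g p, uB p⟫) · sB p. -/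
/-! Linearity of the inner product in its second argument splits the observation into a sum
over side-A symbols and a sum over side-B symbols, the latter with the effective gains
`hBA m p + ⟪g p, uB m⟫`. Nullification and neutralization kill every term with `m ≠ p`, so each
sum collapses to its `p`-th term (`Finset.sum_eq_single`). The surviving side-A term is exactly
the self-interference that is subtracted. -/

open scoped ComplexInnerProductSpace BigOperators

/-- Decoding step of the one-shot scheme (Theorem 2): with the nullification and
interference-neutralization conditions on the relay beamforming vectors, after
subtracting self-interference each side-A receiver `p` observes an interference-free
scalar multiple of its desired symbol `sB p`. -/
theorem stmt0 (K : ℕ) (hK : 1 ≤ K)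
    (g : Fin K → EuclideanSpace ℂ (Fin (2 * K)))
    (hBA : Fin K → Fin K → ℂ)
    (uA uB : Fin K → EuclideanSpace ℂ (Fin (2 * K)))
    (hnull : ∀ p m : Fin K, p ≠ m → ⟪g p, uA m⟫ = 0)
    (hneut : ∀ p m : Fin K, p ≠ m → hBA m p + ⟪g p, uB m⟫ = 0)
    (sA sB : Fin K → ℂ) (p : Fin K) :
    (∑ m, hBA m p * sB m)
      + ⟪g p, (∑ m, sA m • uA m) + (∑ m, sB m • uB m)⟫
      - ⟪g p, uA p⟫ * sA p
    = (hBA p p + ⟪g p, uB p⟫) * sB p := by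
  -- Nullification leaves only the self-interference term of the side-A sum.
  have hA : ∑ m, sA m * ⟪g p, uA m⟫ = sA p * ⟪g p, uA p⟫ :=
    Finset.sum_eq_single p
      (fun m _ hm => by rw [hnull p m hm.symm, mul_zero]) (by simp)
  -- Direct and relayed copies of each undesired side-B symbol cancel.
  have hB : ∑ m, (hBA m p + ⟪g p, uB m⟫) * sB m = (hBA p p + ⟪g p, uB p⟫) * sB p :=
    Finset.sum_eq_single p
      (fun m _ hm => by rw [hneut p m hm.symm, zero_mul]) (by simp)
  have hsplit : ∑ m, (hBA m p + ⟪g p, uB m⟫) * sB m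
      = ∑ m, hBA m p * sB m + ∑ m, sB m * ⟪g p, uB m⟫ := by
    rw [← Finset.sum_add_distrib]
    exact Finset.sum_congr rfl fun m _ => by ring
  simp only [inner_add_right, inner_sum, inner_smul_right]
  rw [hA, ← hB, hsplit]
  ring
end

section
/- Let K ≥ 1. Let gA, gB : Fin K → EuclideanSpace ℂ (Fin (2K)) be relay-to-receiver channel vectors such that the combined family of 2K vectors (gA 0, …, gA (K−1), gB 0, …, gB (K−1)) is linearly independent over ℂ (hence a basis of ℂ^{2K}). Let hBA, hAB : Fin K → Fin K → ℂ be arbitrary direct channel gains (hBA m p from b_m to a_p, hAB m p from a_m to b_p). Then there exist beamforming vectors uA, uB : Fin K → EuclideanSpace ℂ (Fin (2K)) such that for all p, m ∈ Fin K: (i) if m ≠ p then ⟪gA p, uA m⟫ = 0 and ⟪gB p, uB m⟫ = 0 (undesired same-side signals are nulled); (ii) if m ≠ p then hBA m p + ⟪gA p, uB m⟫ = 0 and hAB m p + ⟪gB p, uA m⟫ = 0 (cross-side interference is neutralized); and (iii) hBA p p + ⟪gA p, uB p⟫ ≠ 0 and hAB p p + ⟪gB p, uA p⟫ ≠ 0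 (the desired signal coefficients are nonzero). -/
/-! Linear independence makes interpolation possible: a linear functional may be given arbitrary
values on a linearly independent family, and the Riesz representation turns it into a vector `u`
with arbitrarily prescribed inner products `⟪v i, u⟫` (`exists_inner_eq`). All the conditions
on a single beamforming vector prescribe its inner products with the `2K` channel vectors, or
only require one of them to avoid a single value. So `uA m` can be chosen orthogonal to every `gA p`,
with `⟪gB p, uA m⟫ = -hAB m p` for `p ≠ m` and `⟪gB m, uA m⟫ = 1 - hAB m m`, which makes
the desired coefficient equal to `1`; `uB m` is chosen symmetrically. -/

open scoped ComplexInnerProductSpace BigOperators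

theorem exists_inner_eq {E ι : Type*} [NormedAddCommGroup E] [InnerProductSpace ℂ E]
    [FiniteDimensional ℂ E] {v : ι → E} (hv : LinearIndependent ℂ v) (c : ι → ℂ) :
    ∃ u : E, ∀ i, ⟪v i, u⟫ = c i := by
  have : CompleteSpace E := FiniteDimensional.complete ℂ E
  -- The values are conjugated because Riesz represents `f` as `⟪u, ·⟫`, not `⟪·, u⟫`.
  obtain ⟨f, hf⟩ : ∃ f : E →ₗ[ℂ] ℂ, ∀ i, f (v i) = starRingEnd ℂ (c i) := by
    obtain ⟨f, hf⟩ := LinearMap.exists_extend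
      ((Finsupp.linearCombination ℂ fun i => starRingEnd ℂ (c i)) ∘ₗ hv.repr)
    refine ⟨f, fun i => ?_⟩
    have h := LinearMap.congr_fun hf ⟨v i, Submodule.subset_span ⟨i, rfl⟩⟩
    simpa [hv.repr_eq_single i ⟨v i, Submodule.subset_span ⟨i, rfl⟩⟩ rfl] using h
  refine ⟨(InnerProductSpace.toDual ℂ E).symm (LinearMap.toContinuousLinearMap f), fun i => ?_⟩
  rw [← inner_conj_symm, InnerProductSpace.toDual_symm_apply]
  simp [hf]

/-- Beamforming-vector existence step in the proof of Theorem 2: given that the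
`2K` relay channel vectors (`gA` together with `gB`) are linearly independent,
there exist beamforming vectors nulling all undesired same-side signals,
neutralizing all cross-side interference, and keeping every desired-signal
coefficient nonzero. -/
theorem stmt1 (K : ℕ) (hK : 1 ≤ K)
    (gA gB : Fin K → EuclideanSpace ℂ (Fin (2 * K)))
    (hli : LinearIndependent ℂ (Sum.elim gA gB))
    (hBA hAB : Fin K → Fin K → ℂ) :
    ∃ uA uB : Fin K → EuclideanSpace ℂ (Fin (2 * K)),
      (∀ p m : Fin K, m ≠ p → ⟪gA p, uA m⟫ = 0) ∧
      (∀ p m : Fin K, m ≠ p → ⟪gB p, uB m⟫ = 0) ∧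
      (∀ p m : Fin K, m ≠ p → hBA m p + ⟪gA p, uB m⟫ = 0) ∧
      (∀ p m : Fin K, m ≠ p → hAB m p + ⟪gB p, uA m⟫ = 0) ∧
      (∀ p : Fin K, hBA p p + ⟪gA p, uB p⟫ ≠ 0) ∧
      (∀ p : Fin K, hAB p p + ⟪gB p, uA p⟫ ≠ 0) := by
  choose uA hA using fun m => exists_inner_eq hli
    (Sum.elim (fun _ => 0) fun p => (if m = p then 1 else 0) - hAB m p)
  choose uB hB using fun m => exists_inner_eq hli
    (Sum.elim (fun p => (if m = p then 1 else 0) - hBA m p) fun _ => 0)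
  simp only [Sum.forall, Sum.elim_inl, Sum.elim_inr] at hA hB
  refine ⟨uA, uB, fun p m _ => (hA m).1 p, fun p m _ => (hB m).2 p, fun p m h => ?_,
    fun p m h => ?_, fun p => ?_, fun p => ?_⟩
  · simp [(hB m).1 p, h]
  · simp [(hA m).2 p, h]
  · simp [(hB p).1 p]
  · simp [(hA p).2 p]
end
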